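/- arXiv:2211.01597 — 2 statements merged into one kernel-verified Lean document; each statement's English description precedes it below -/
import Mathlib

section
/- With the notation below, suppose b_0+b_2 ≡ b_1+b_3 ≡ 1 (mod 2), that D_4(b)·D_4(c) is 2^8 times an odd integer, and that ββ̄·γγ̄ is 2^7 times an odd integer. Then D_4(b)·D_4(c)·ββ̄·γγ̄ = 2^15 · p · (2m+1) for some prime p ∈ P and some integer m. -/
open Matrix Complex

def D4 (x0 x1 x2 x3 : ℤ) : ℤ :=
  (Matrix.of ![![x0, x1, x2, x3], ![x3, x0, x1, x2], ![x2, x3, x0, x1], ![x1, x2, x3, x0]]).det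

def Pset : Set ℤ := {p : ℤ | Prime p ∧ 0 < p ∧ p ≡ -3 [ZMOD 8]}

def bI (a : ℕ → ℤ) (i : ℕ) : ℤ := (a i + a (i + 8)) + (a (i + 4) + a (i + 12))

def cI (a : ℕ → ℤ) (i : ℕ) : ℤ := (a i + a (i + 8)) - (a (i + 4) + a (i + 12))

def dd (a : ℕ → ℤ) (i : ℕ) : ℤ := a i - a (i + 8)

noncomputable def alphaD (d : ℕ → ℤ) (i : ℕ) : ℂ := (d i : ℂ) + Complex.I * (d (i + 4) : ℂ)

noncomputable def betaD (d : ℕ → ℤ) : ℂ :=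
  (alphaD d 0 + alphaD d 2) ^ 2 - (alphaD d 1 + alphaD d 3) ^ 2

noncomputable def gammaD (d : ℕ → ℤ) : ℂ :=
  (alphaD d 0 - alphaD d 2) ^ 2 + (alphaD d 1 - alphaD d 3) ^ 2

/-!
A sum of two squares congruent to `5` modulo `8` has a prime factor congruent to `5` modulo `8`: its
prime factors of odd multiplicity are `1` modulo `4`, and they cannot all be `1` modulo `8`.

Put `S = Re (α₀ ᾱ₂ + α₁ ᾱ₃)`. The sum of `b₀ b₂ + b₁ b₃` and `c₀ c₂ + c₁ c₃` is `2 S` modulo `4`.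

* If `S` is odd, one of the two is divisible by `4`, as both are even. Since `2 ^ 8` is the
  exact power, the sum of squares occurring in that circulant determinant is then `10` modulo `16`,
  that is, twice a sum of two squares that is `5` modulo `8`.
* If `S` is even, then `Im β ≡ Im γ` modulo `8`, while `Re β`, `Re γ` are even and `Im β`, `Im γ`
  are divisible by `4`. The exact power `2 ^ 7` forces one of `|β|² / 4` and `|γ|² / 4` to be
  `u ^ 2 + 4 k ^ 2` with `u` and `k` odd, which is `5` modulo `8`.
-/

theorem modEq_one_of_forall_prime_dvd {m n : ℕ} (hn : n ≠ 0)
    (h : ∀ p : ℕ, p.Prime → p ∣ n → p ≡ 1 [MOD m]) : n ≡ 1 [MOD m] := by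
  induction n using Nat.recOnMul with
  | zero => exact absurd rfl hn
  | one => rfl
  | prime p hp => exact h p hp dvd_rfl
  | mul a b iha ihb =>
    obtain ⟨ha, hb⟩ := mul_ne_zero_iff.1 hn
    exact (iha ha fun p hp hpa => h p hp (hpa.mul_right b)).mul
      (ihb hb fun p hp hpb => h p hp (hpb.mul_left a))

theorem modEq_one_of_isSquare_neg_one {n : ℕ} (hn : Odd n) (hsq : IsSquare (-1 : ZMod n))
    (h : ∀ p : ℕ, p.Prime → p ∣ n → ¬ p ≡ 5 [MOD 8]) : n ≡ 1 [MOD 8] := by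
  refine modEq_one_of_forall_prime_dvd hn.pos.ne' fun p hp hpn => ?_
  have hp_odd : p % 2 = 1 := Nat.odd_iff.1 (hn.of_dvd_nat hpn)
  have hp_mod_four : p % 4 ≠ 3 :=
    Nat.mod_four_ne_three_of_mem_primeFactors_of_isSquare_neg_one
      (Nat.mem_primeFactors.2 ⟨hp, hpn, hn.pos.ne'⟩) hsq
  have hp_mod_eight := h p hp hpn
  simp only [Nat.ModEq] at hp_mod_eight ⊢
  omega

theorem exists_prime_modEq_five_dvd_sq_add_sq {x y : ℕ} (h : x ^ 2 + y ^ 2 ≡ 5 [MOD 8]) :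
    ∃ p : ℕ, p.Prime ∧ p ≡ 5 [MOD 8] ∧ p ∣ x ^ 2 + y ^ 2 := by
  obtain ⟨a, b, hab, hsq⟩ := Nat.eq_sq_add_sq_iff_eq_sq_mul.1 ⟨x, y, rfl⟩
  rw [hab] at h ⊢
  have h_odd : Odd (a ^ 2 * b) := Nat.odd_iff.2 (by simp only [Nat.ModEq] at h; omega)
  by_contra! hcon
  have hb : b ≡ 1 [MOD 8] := modEq_one_of_isSquare_neg_one (Nat.odd_mul.1 h_odd).2 hsq
    fun p hp hpb hp5 => hcon p hp hp5 (hpb.mul_left _)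
  have ha : a ^ 2 ≡ 5 [MOD 8] := by simpa using (hb.mul_left (a ^ 2)).symm.trans h
  have sq_ne_five : ∀ r : ZMod 8, r ^ 2 ≠ 5 := by decide
  exact sq_ne_five a (mod_cast (ZMod.natCast_eq_natCast_iff _ _ _).2 ha)

/-- Divisibility by some prime of the set `P`, the property that has to be established for
`D₄(b) D₄(c) |β|² |γ|²`. -/
def HasPsetFactor (n : ℤ) : Prop := ∃ p ∈ Pset, p ∣ n

namespace HasPsetFactor

theorem of_dvd {m n : ℤ} (hmn : m ∣ n) : HasPsetFactor m → HasPsetFactor n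
  | ⟨p, hp, hpm⟩ => ⟨p, hp, hpm.trans hmn⟩

theorem of_sq_add_sq_modEq {x y : ℤ} (h : x ^ 2 + y ^ 2 ≡ 5 [ZMOD 8]) :
    HasPsetFactor (x ^ 2 + y ^ 2) := by
  have h_cast : x ^ 2 + y ^ 2 = ((x.natAbs ^ 2 + y.natAbs ^ 2 : ℕ) : ℤ) := by simp
  rw [h_cast] at h ⊢
  obtain ⟨p, hp, hp5, hpd⟩ := exists_prime_modEq_five_dvd_sq_add_sq (Int.natCast_modEq_iff.1 h)
  have hp_mem : (p : ℤ) ≡ -3 [ZMOD 8] := (Int.natCast_modEq_iff.2 hp5).trans rfl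
  exact ⟨p, ⟨Nat.prime_iff_prime_int.1 hp, mod_cast hp.pos, hp_mem⟩, mod_cast hpd⟩

theorem of_sq_add_sq_modEq_ten {x y : ℤ} (h : x ^ 2 + y ^ 2 ≡ 10 [ZMOD 16]) :
    HasPsetFactor (x ^ 2 + y ^ 2) := by
  simp only [Int.ModEq] at h
  obtain ⟨n, hn⟩ : 2 ∣ x ^ 2 + y ^ 2 := by omega
  have hn_sq := Int.sq_add_sq_of_two_mul_sq_add_sq hn.symm
  refine of_dvd ⟨2, by rw [hn, mul_comm]⟩ (hn_sq ▸ of_sq_add_sq_modEq ?_ : HasPsetFactor n)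
  simp only [← hn_sq, Int.ModEq]
  omega

theorem of_odd_of_odd {u k : ℤ} (hu : Odd u) (hk : Odd k) :
    HasPsetFactor (u ^ 2 + (2 * k) ^ 2) := by
  refine of_sq_add_sq_modEq ?_
  have hu_sq := Int.eight_dvd_sq_sub_one_of_odd hu
  have hk_sq := Int.eight_dvd_sq_sub_one_of_odd hk
  simp only [Int.ModEq, mul_pow]
  omega

theorem exists_eq_two_pow_mul {n t : ℤ} {k : ℕ} (hn : HasPsetFactor n) (ht : Odd t)
    (hnt : n = 2 ^ k * t) : ∃ p ∈ Pset, ∃ m : ℤ, n = 2 ^ k * p * (2 * m + 1) := by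
  obtain ⟨p, hp, hpn⟩ := hn
  have hp_odd : Odd p := by
    have hp_mod : p % 8 = -3 % 8 := hp.2.2
    exact Int.odd_iff.2 (by omega)
  have h_coprime : IsCoprime p (2 ^ k) := (Int.isCoprime_two_right.2 hp_odd).pow_right
  obtain ⟨s, rfl⟩ := h_coprime.dvd_of_dvd_mul_left (hnt ▸ hpn)
  obtain ⟨m, rfl⟩ := (Int.odd_mul.1 ht).2
  exact ⟨p, hp, m, by rw [hnt, mul_assoc]⟩

end HasPsetFactor

section Parity

variable {x y : ℤ}

theorem eight_dvd_sq_sub_sq_of_odd (hx : Odd x) (hy : Odd y) : 8 ∣ x ^ 2 - y ^ 2 := by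
  simpa using dvd_sub (Int.eight_dvd_sq_sub_one_of_odd hx) (Int.eight_dvd_sq_sub_one_of_odd hy)

theorem odd_sub_of_odd_add (h : Odd (x + y)) : Odd (x - y) :=
  Int.odd_sub.2 (Int.odd_add.1 h)

theorem even_mul_of_odd_add (h : Odd (x + y)) : Even (x * y) := by
  grind [Int.odd_add, Int.not_even_iff_odd]

theorem two_dvd_sq_add_sq_of_odd (hx : Odd x) (hy : Odd y) : 2 ∣ x ^ 2 + y ^ 2 :=
  (hx.pow.add_odd hy.pow).two_dvd

end Parity

section Circulant

variable {x0 x1 x2 x3 : ℤ}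

theorem D4_eq (x0 x1 x2 x3 : ℤ) : D4 x0 x1 x2 x3 =
    ((x0 + x2) ^ 2 - (x1 + x3) ^ 2) * ((x0 - x2) ^ 2 + (x1 - x3) ^ 2) := by
  have laplace : D4 x0 x1 x2 x3 =
      x0 * (x0 * x0 * x0 - x0 * x1 * x3 - x1 * x3 * x0 + x1 * x1 * x2 + x2 * x3 * x3 -
        x2 * x0 * x2) +
      -(x1 * (x3 * x0 * x0 - x3 * x1 * x3 - x1 * x2 * x0 + x1 * x1 * x1 + x2 * x2 * x3 -
        x2 * x0 * x1)) +
      x2 * (x3 * x3 * x0 - x3 * x1 * x2 - x0 * x2 * x0 + x0 * x1 * x1 + x2 * x2 * x2 -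
        x2 * x3 * x1) +
      -(x3 * (x3 * x3 * x3 - x3 * x0 * x2 - x0 * x2 * x3 + x0 * x0 * x1 + x1 * x2 * x2 -
        x1 * x3 * x1)) := by
    rw [D4, Matrix.det_succ_row_zero]
    simp [Matrix.det_fin_three, Fin.sum_univ_four, Fin.succAbove]
  rw [laplace]
  ring

theorem sixteen_dvd_D4 (h02 : Odd (x0 + x2)) (h13 : Odd (x1 + x3)) : 16 ∣ D4 x0 x1 x2 x3 := by
  rw [D4_eq]
  exact mul_dvd_mul (eight_dvd_sq_sub_sq_of_odd h02 h13)
    (two_dvd_sq_add_sq_of_odd (odd_sub_of_odd_add h02) (odd_sub_of_odd_add h13))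

theorem sq_add_sq_modEq_ten (h02 : Odd (x0 + x2)) (h13 : Odd (x1 + x3))
    (h32 : ¬ 32 ∣ D4 x0 x1 x2 x3) (h4 : 4 ∣ x0 * x2 + x1 * x3) :
    (x0 - x2) ^ 2 + (x1 - x3) ^ 2 ≡ 10 [ZMOD 16] := by
  have h_not_sixteen : ¬ 16 ∣ (x0 + x2) ^ 2 - (x1 + x3) ^ 2 := fun h => h32 <| by
    rw [D4_eq]
    exact mul_dvd_mul h
      (two_dvd_sq_add_sq_of_odd (odd_sub_of_odd_add h02) (odd_sub_of_odd_add h13))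
  have h02_sq := Int.eight_dvd_sq_sub_one_of_odd h02
  have h13_sq := Int.eight_dvd_sq_sub_one_of_odd h13
  have h_expand : (x0 - x2) ^ 2 + (x1 - x3) ^ 2 =
      (x0 + x2) ^ 2 + (x1 + x3) ^ 2 - 4 * (x0 * x2 + x1 * x3) := by ring
  simp only [Int.ModEq]
  omega

theorem hasPsetFactor_D4 (h02 : Odd (x0 + x2)) (h13 : Odd (x1 + x3))
    (h32 : ¬ 32 ∣ D4 x0 x1 x2 x3) (h4 : 4 ∣ x0 * x2 + x1 * x3) :
    HasPsetFactor (D4 x0 x1 x2 x3) :=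
  .of_dvd (D4_eq x0 x1 x2 x3 ▸ dvd_mul_left _ _)
    (.of_sq_add_sq_modEq_ten (sq_add_sq_modEq_ten h02 h13 h32 h4))

theorem hasPsetFactor_D4_mul_D4 {y0 y1 y2 y3 t : ℤ} (hx02 : Odd (x0 + x2)) (hx13 : Odd (x1 + x3))
    (hy02 : Odd (y0 + y2)) (hy13 : Odd (y1 + y3)) (ht : Odd t)
    (hD : D4 x0 x1 x2 x3 * D4 y0 y1 y2 y3 = 2 ^ 8 * t)
    (h4 : ¬ 4 ∣ x0 * x2 + x1 * x3 + (y0 * y2 + y1 * y3)) :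
    HasPsetFactor (D4 x0 x1 x2 x3 * D4 y0 y1 y2 y3) := by
  have hx_even := ((even_mul_of_odd_add hx02).add (even_mul_of_odd_add hx13)).two_dvd
  have hy_even := ((even_mul_of_odd_add hy02).add (even_mul_of_odd_add hy13)).two_dvd
  have ht_mod := Int.odd_iff.1 ht
  rcases (by omega : 4 ∣ x0 * x2 + x1 * x3 ∨ 4 ∣ y0 * y2 + y1 * y3) with hx4 | hy4
  · refine .of_dvd (dvd_mul_right _ _) (hasPsetFactor_D4 hx02 hx13 (fun h32 => ?_) hx4)
    have h_dvd := mul_dvd_mul h32 (sixteen_dvd_D4 hy02 hy13)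
    omega
  · refine .of_dvd (dvd_mul_left _ _) (hasPsetFactor_D4 hy02 hy13 (fun h32 => ?_) hy4)
    have h_dvd := mul_dvd_mul (sixteen_dvd_D4 hx02 hx13) h32
    omega

end Circulant

section GaussianNorms

theorem odd_of_sq_add_sq_eq_eight_mul_odd {v l s : ℤ} (hs : Odd s)
    (h : v ^ 2 + (2 * l) ^ 2 = 8 * s) : Odd l := by
  by_contra hl
  obtain ⟨m, rfl⟩ := (Int.not_odd_iff_even.1 hl).two_dvd
  have h_dvd : (2 : ℤ) ^ 2 ∣ v ^ 2 := ⟨2 * s - 4 * m ^ 2, by linear_combination h⟩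
  obtain ⟨w, rfl⟩ := (Int.pow_dvd_pow_iff two_ne_zero).1 h_dvd
  have hw_sq : Even (w ^ 2) := ⟨s - 2 * m ^ 2, by linarith⟩
  obtain ⟨r, rfl⟩ := ((Int.even_pow' two_ne_zero).1 hw_sq).two_dvd
  exact Int.not_even_iff_odd.2 hs ⟨r ^ 2 + m ^ 2, by linarith⟩

theorem exists_odd_eq_two_pow_mul_of_odd_mul {x y t : ℤ} {n : ℕ} (hx : Odd x) (ht : Odd t)
    (h : x * y = 2 ^ n * t) : ∃ s, Odd s ∧ y = 2 ^ n * s := by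
  have h_coprime : IsCoprime (2 ^ n) x := (Int.isCoprime_two_left.2 hx).pow_left
  obtain ⟨s, rfl⟩ := h_coprime.dvd_of_dvd_mul_left ⟨t, h⟩
  have hst : x * s = t :=
    mul_left_cancel₀ (pow_ne_zero n (two_ne_zero' ℤ)) (by linear_combination h)
  exact ⟨s, (Int.odd_mul.1 (hst ▸ ht)).2, rfl⟩

theorem odd_sq_add_two_mul_sq_iff {u k : ℤ} : Odd (u ^ 2 + (2 * k) ^ 2) ↔ Odd u := by
  simp [parity_simps]

theorem hasPsetFactor_of_odd_of_mul_eq_eight_mul_odd {u k v l t : ℤ} (hu : Odd u)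
    (hkl : Even (k - l)) (ht : Odd t)
    (h : (u ^ 2 + (2 * k) ^ 2) * (v ^ 2 + (2 * l) ^ 2) = 2 ^ 3 * t) :
    HasPsetFactor (u ^ 2 + (2 * k) ^ 2) := by
  obtain ⟨s, hs, hvl⟩ := exists_odd_eq_two_pow_mul_of_odd_mul (odd_sq_add_two_mul_sq_iff.2 hu) ht h
  have hl : Odd l := odd_of_sq_add_sq_eq_eight_mul_odd hs hvl
  exact .of_odd_of_odd hu (by simpa using hkl.add_odd hl)

theorem hasPsetFactor_mul_of_mul_eq_eight_mul_odd {u k v l t : ℤ} (hkl : Even (k - l)) (ht : Odd t)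
    (h : (u ^ 2 + (2 * k) ^ 2) * (v ^ 2 + (2 * l) ^ 2) = 2 ^ 3 * t) :
    HasPsetFactor ((u ^ 2 + (2 * k) ^ 2) * (v ^ 2 + (2 * l) ^ 2)) := by
  by_cases hu : Odd u
  · exact .of_dvd (dvd_mul_right _ _) (hasPsetFactor_of_odd_of_mul_eq_eight_mul_odd hu hkl ht h)
  by_cases hv : Odd v
  · rw [mul_comm] at h ⊢
    exact .of_dvd (dvd_mul_right _ _)
      (hasPsetFactor_of_odd_of_mul_eq_eight_mul_odd hv (by simpa using hkl.neg) ht h)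
  obtain ⟨u', rfl⟩ := (Int.not_odd_iff_even.1 hu).two_dvd
  obtain ⟨v', rfl⟩ := (Int.not_odd_iff_even.1 hv).two_dvd
  exact absurd ⟨(u' ^ 2 + k ^ 2) * (v' ^ 2 + l ^ 2), by linarith⟩ (Int.not_even_iff_odd.2 ht)

theorem norm_eq_sq_add_sq (z : GaussianInt) : z.norm = z.re ^ 2 + z.im ^ 2 := by
  rw [Zsqrtd.norm_def]
  ring

theorem hasPsetFactor_norm_mul_norm {z w : GaussianInt} {t : ℤ} (hz_re : Even z.re)
    (hz_im : 4 ∣ z.im) (hw_re : Even w.re) (hw_im : 4 ∣ w.im) (h_im : 8 ∣ z.im - w.im)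
    (ht : Odd t) (h : z.norm * w.norm = 2 ^ 7 * t) : HasPsetFactor (z.norm * w.norm) := by
  obtain ⟨u, hu⟩ := hz_re.two_dvd
  obtain ⟨v, hv⟩ := hw_re.two_dvd
  obtain ⟨k, hk⟩ := hz_im
  obtain ⟨l, hl⟩ := hw_im
  have h_factor : z.norm * w.norm =
      2 ^ 4 * ((u ^ 2 + (2 * k) ^ 2) * (v ^ 2 + (2 * l) ^ 2)) := by
    rw [norm_eq_sq_add_sq, norm_eq_sq_add_sq, hu, hv, hk, hl]
    ring
  have hkl : Even (k - l) := Int.even_iff.2 (by omega)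
  rw [h_factor]
  exact .of_dvd (dvd_mul_left _ _) (hasPsetFactor_mul_of_mul_eq_eight_mul_odd hkl ht (by linarith))

theorem odd_re_sq {z : GaussianInt} (hz : Odd (z.re + z.im)) : Odd (z ^ 2).re := by
  have h_re : (z ^ 2).re = (z.re + z.im) * (z.re - z.im) := by
    simp only [sq, Zsqrtd.re_mul]
    ring
  exact h_re ▸ hz.mul (odd_sub_of_odd_add hz)

theorem four_dvd_im_sq {z : GaussianInt} (hz : Odd (z.re + z.im)) : 4 ∣ (z ^ 2).im := by
  obtain ⟨k, hk⟩ := even_mul_of_odd_add hz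
  exact ⟨k, by simp only [sq, Zsqrtd.im_mul]; linear_combination 2 * hk⟩

end GaussianNorms

section BetaGamma

/-- The number `αᵢ` as an element of `ℤ[i]`, where divisibility of its parts makes sense. -/
def gaussianAlpha (d : ℕ → ℤ) (i : ℕ) : GaussianInt := ⟨d i, d (i + 4)⟩

/-- The number `β` as an element of `ℤ[i]`, so that `|β|²` is its integer norm. -/
def gaussianBeta (d : ℕ → ℤ) : GaussianInt :=
  (gaussianAlpha d 0 + gaussianAlpha d 2) ^ 2 - (gaussianAlpha d 1 + gaussianAlpha d 3) ^ 2

/-- The number `γ` as an element of `ℤ[i]`, so that `|γ|²` is its integer norm. -/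
def gaussianGamma (d : ℕ → ℤ) : GaussianInt :=
  (gaussianAlpha d 0 - gaussianAlpha d 2) ^ 2 + (gaussianAlpha d 1 - gaussianAlpha d 3) ^ 2

theorem toComplex_gaussianAlpha (d : ℕ → ℤ) (i : ℕ) :
    (gaussianAlpha d i : ℂ) = alphaD d i := by
  rw [gaussianAlpha, GaussianInt.toComplex_def', alphaD, mul_comm]

theorem toComplex_gaussianBeta (d : ℕ → ℤ) : (gaussianBeta d : ℂ) = betaD d := by
  simp only [gaussianBeta, betaD, map_sub, map_add, map_pow, toComplex_gaussianAlpha]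

theorem toComplex_gaussianGamma (d : ℕ → ℤ) : (gaussianGamma d : ℂ) = gammaD d := by
  simp only [gaussianGamma, gammaD, map_sub, map_add, map_pow, toComplex_gaussianAlpha]

theorem eq_norm_of_intCast_eq_mul_conj {n : ℤ} {z : GaussianInt}
    (h : (n : ℂ) = z * (starRingEnd ℂ) z) : n = z.norm := by
  rw [Complex.mul_conj, ← GaussianInt.intCast_complex_norm] at h
  exact Int.cast_injective h

variable {d : ℕ → ℤ}

theorem odd_re_add_im_gaussianAlpha_add {i j : ℕ} (h : Odd (d i + d (i + 4) + (d j + d (j + 4)))) :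
    Odd ((gaussianAlpha d i + gaussianAlpha d j).re +
      (gaussianAlpha d i + gaussianAlpha d j).im) := by
  simpa only [gaussianAlpha, Zsqrtd.re_add, Zsqrtd.im_add, add_add_add_comm] using h

theorem odd_re_add_im_gaussianAlpha_sub {i j : ℕ} (h : Odd (d i + d (i + 4) + (d j + d (j + 4)))) :
    Odd ((gaussianAlpha d i - gaussianAlpha d j).re +
      (gaussianAlpha d i - gaussianAlpha d j).im) := by
  simpa only [gaussianAlpha, Zsqrtd.re_sub, Zsqrtd.im_sub, add_sub_add_comm] using
    odd_sub_of_odd_add h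

theorem im_gaussianBeta_sub_im_gaussianGamma (d : ℕ → ℤ) :
    (gaussianBeta d).im - (gaussianGamma d).im =
      4 * (d 0 * d 6 + d 4 * d 2 - (d 1 * d 5 + d 3 * d 7)) := by
  simp only [gaussianBeta, gaussianGamma, gaussianAlpha, sq, Zsqrtd.im_sub, Zsqrtd.im_add,
    Zsqrtd.im_mul, Zsqrtd.re_add, Zsqrtd.re_sub, zero_add, Nat.reduceAdd]
  ring

theorem eight_dvd_im_gaussianBeta_sub_im_gaussianGamma
    (h02 : Odd (d 0 + d 4 + (d 2 + d 6))) (h13 : Odd (d 1 + d 5 + (d 3 + d 7)))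
    (hS : Even (d 0 * d 2 + d 4 * d 6 + (d 1 * d 3 + d 5 * d 7))) :
    8 ∣ (gaussianBeta d).im - (gaussianGamma d).im := by
  have h_even02 : Even ((d 0 + d 4) * (d 2 + d 6)) := even_mul_of_odd_add h02
  have h_even13 : Even ((d 1 + d 7) * (d 3 + d 5)) :=
    even_mul_of_odd_add (by convert h13 using 1; ring)
  have h_cross : d 0 * d 6 + d 4 * d 2 - (d 1 * d 5 + d 3 * d 7) =
      (d 0 + d 4) * (d 2 + d 6) + (d 1 + d 7) * (d 3 + d 5) -
        (d 0 * d 2 + d 4 * d 6 + (d 1 * d 3 + d 5 * d 7)) - 2 * (d 1 * d 5 + d 3 * d 7) := by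
    ring
  rw [im_gaussianBeta_sub_im_gaussianGamma, h_cross]
  exact mul_dvd_mul_left 4 (((h_even02.add h_even13).sub hS).sub (even_two_mul _)).two_dvd

theorem hasPsetFactor_norm_gaussianBeta_mul_norm_gaussianGamma {t : ℤ}
    (h02 : Odd (d 0 + d 4 + (d 2 + d 6))) (h13 : Odd (d 1 + d 5 + (d 3 + d 7)))
    (hS : Even (d 0 * d 2 + d 4 * d 6 + (d 1 * d 3 + d 5 * d 7))) (ht : Odd t)
    (h : (gaussianBeta d).norm * (gaussianGamma d).norm = 2 ^ 7 * t) :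
    HasPsetFactor ((gaussianBeta d).norm * (gaussianGamma d).norm) := by
  have h_add02 := odd_re_add_im_gaussianAlpha_add h02
  have h_add13 := odd_re_add_im_gaussianAlpha_add h13
  have h_sub02 := odd_re_add_im_gaussianAlpha_sub h02
  have h_sub13 := odd_re_add_im_gaussianAlpha_sub h13
  exact hasPsetFactor_norm_mul_norm
    ((odd_re_sq h_add02).sub_odd (odd_re_sq h_add13))
    (dvd_sub (four_dvd_im_sq h_add02) (four_dvd_im_sq h_add13))
    ((odd_re_sq h_sub02).add_odd (odd_re_sq h_sub13))
    (dvd_add (four_dvd_im_sq h_sub02) (four_dvd_im_sq h_sub13))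
    (eight_dvd_im_gaussianBeta_sub_im_gaussianGamma h02 h13 hS) ht h

end BetaGamma

section Transforms

variable {a : ℕ → ℤ} {i j : ℕ}

theorem odd_cI_add_cI (h : Odd (bI a i + bI a j)) : Odd (cI a i + cI a j) := by
  simp only [bI, cI, Int.odd_iff] at *
  omega

theorem odd_dd_add_dd (h : Odd (bI a i + bI a j)) :
    Odd (dd a i + dd a (i + 4) + (dd a j + dd a (j + 4))) := by
  simp only [bI, dd, add_assoc, Nat.reduceAdd, Int.odd_iff] at *
  omega

theorem bI_mul_add_cI_mul_modEq (a : ℕ → ℤ) (i j : ℕ) :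
    bI a i * bI a j + cI a i * cI a j ≡
      2 * (dd a i * dd a j + dd a (i + 4) * dd a (j + 4)) [ZMOD 4] := by
  refine (Int.modEq_iff_dvd.2 ⟨a (i + 8) * a j + a i * a (j + 8) +
    a (i + 12) * a (j + 4) + a (i + 4) * a (j + 12), ?_⟩).symm
  simp only [bI, cI, dd, add_assoc, Nat.reduceAdd]
  ring

theorem not_four_dvd_bI_mul_add_cI_mul
    (hS : ¬ Even (dd a 0 * dd a 2 + dd a 4 * dd a 6 + (dd a 1 * dd a 3 + dd a 5 * dd a 7))) :
    ¬ 4 ∣ bI a 0 * bI a 2 + bI a 1 * bI a 3 + (cI a 0 * cI a 2 + cI a 1 * cI a 3) := by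
  have h02 := bI_mul_add_cI_mul_modEq a 0 2
  have h13 := bI_mul_add_cI_mul_modEq a 1 3
  simp only [Int.ModEq, Nat.reduceAdd] at h02 h13
  rw [Int.even_iff] at hS
  omega

end Transforms

theorem stmt18 (a : ℕ → ℤ) (B G : ℤ)
    (hB : (B : ℂ) = betaD (dd a) * (starRingEnd ℂ) (betaD (dd a)))
    (hG : (G : ℂ) = gammaD (dd a) * (starRingEnd ℂ) (gammaD (dd a)))
    (h1 : bI a 0 + bI a 2 ≡ 1 [ZMOD 2]) (h2 : bI a 1 + bI a 3 ≡ 1 [ZMOD 2])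
    (hD : ∃ t : ℤ, Odd t ∧
      D4 (bI a 0) (bI a 1) (bI a 2) (bI a 3) * D4 (cI a 0) (cI a 1) (cI a 2) (cI a 3) = 2 ^ 8 * t)
    (hBG : ∃ t : ℤ, Odd t ∧ B * G = 2 ^ 7 * t) :
    ∃ p ∈ Pset, ∃ m : ℤ,
      D4 (bI a 0) (bI a 1) (bI a 2) (bI a 3) * D4 (cI a 0) (cI a 1) (cI a 2) (cI a 3) * (B * G) =
        2 ^ 15 * p * (2 * m + 1) := by
  obtain ⟨t, ht, hDt⟩ := hD
  obtain ⟨r, hr, hBGr⟩ := hBG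
  have hb02 : Odd (bI a 0 + bI a 2) := Int.odd_iff.2 h1
  have hb13 : Odd (bI a 1 + bI a 3) := Int.odd_iff.2 h2
  obtain rfl : B = (gaussianBeta (dd a)).norm :=
    eq_norm_of_intCast_eq_mul_conj (by rw [hB, toComplex_gaussianBeta])
  obtain rfl : G = (gaussianGamma (dd a)).norm :=
    eq_norm_of_intCast_eq_mul_conj (by rw [hG, toComplex_gaussianGamma])
  refine HasPsetFactor.exists_eq_two_pow_mul ?_ (ht.mul hr) (by rw [hDt, hBGr]; ring)
  by_cases hS : Even (dd a 0 * dd a 2 + dd a 4 * dd a 6 + (dd a 1 * dd a 3 + dd a 5 * dd a 7))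
  · exact .of_dvd (dvd_mul_left _ _) (hasPsetFactor_norm_gaussianBeta_mul_norm_gaussianGamma
      (odd_dd_add_dd hb02) (odd_dd_add_dd hb13) hS hr hBGr)
  · exact .of_dvd (dvd_mul_right _ _) (hasPsetFactor_D4_mul_D4 hb02 hb13 (odd_cI_add_cI hb02)
      (odd_cI_add_cI hb13) ht hDt (not_four_dvd_bI_mul_add_cI_mul hS))
end

section
/- For every integer m, the integers 16m+1, 2^16·(4m+1), 2^16·(4m−1), and 2^16·(2m) all belong to S(C_4^2); moreover, for every integer m and every prime p ∈ P, the integer 2^15 · p · (2m+1) belongs to S(C_4^2). -/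
open Matrix Complex

def groupDet4x4 (a : ZMod 4 × ZMod 4 → ℤ) : ℤ :=
  Matrix.det (Matrix.of fun g h : ZMod 4 × ZMod 4 => a (g - h))

def S44 : Set ℤ := Set.range groupDet4x4

/-!
The group determinant of `(ℤ/4ℤ)²` factors, over the characters of the second factor, into circulant
determinants. The factor of the trivial character is the circulant determinant of the row sums, and
adding a constant to a row changes this factor only. The Fourier coefficients of the row sums then
move independently in steps of 16, 16, 8 and 8, so one array per residue class realizes a whole
family of values. For a prime `p ≡ -3 [ZMOD 8]`, write `p = a ^ 2 + b ^ 2`; then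
`(a + b) ^ 2 + (a - b) ^ 2 = 2 * p`, where one of `a + b`, `a - b` is `±3` modulo 8 and the other
is `±1`, so that, up to signs, these two numbers can be the real and imaginary part of a single
coefficient.
-/

/-- The Fourier transform of `a : A × B → R` in the second variable only. -/
def partialFourier {A B R : Type*} [AddMonoid B] [Fintype B] [CommSemiring R]
    (a : A × B → R) (ψ : AddChar B R) (x : A) : R :=
  ∑ y, a (x, y) * ψ y

section Circulant

variable {A B R : Type*} [CommRing R]

theorem det_of_addChar_ne_zero [AddMonoid B] [Fintype B] [DecidableEq B] [IsDomain R]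
    {ψ : B → AddChar B R} (hψ : Function.Injective ψ) :
    (Matrix.of fun j y => ψ j y).det ≠ 0 := by
  have hlin : LinearIndependent R fun j => (ψ j : B → R) :=
    (linearIndependent_monoidHom (Multiplicative B) R).comp (fun j => (ψ j).toMonoidHom)
      (AddChar.toMonoidHomEquiv.injective.comp hψ)
  intro hdet
  obtain ⟨v, hv, hv0⟩ := exists_vecMul_eq_zero_iff.mpr hdet
  refine hv (funext (Fintype.linearIndependent_iff.mp hlin v ?_))
  rw [← hv0, vecMul_eq_sum]
  rfl

theorem partialFourier_convolution [AddGroup B] [Fintype B] (a : A × B → R) (ψ : AddChar B R)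
    (x : A) (y' : B) : ∑ y, ψ y * a (x, y - y') = partialFourier a ψ x * ψ y' := by
  rw [← Equiv.sum_comp (Equiv.addRight y'), partialFourier, Finset.sum_mul]
  refine Finset.sum_congr rfl fun u _ => ?_
  rw [Equiv.coe_addRight, add_sub_cancel_right, AddChar.map_add_eq_mul]
  ring

theorem det_circulant_prod [AddGroup A] [Fintype A] [DecidableEq A] [AddGroup B] [Fintype B]
    [DecidableEq B] [IsDomain R] {ψ : B → AddChar B R} (hψ : Function.Injective ψ)
    (a : A × B → R) :
    (circulant a).det = ∏ j, (circulant (partialFourier a (ψ j))).det := by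
  let Ψ : Matrix (A × B) (A × B) R := kroneckerMap (· * ·) 1 (Matrix.of fun j y => ψ j y)
  have hΨ : Ψ.det ≠ 0 := by
    rw [det_kronecker, det_one, one_pow, one_mul]
    exact pow_ne_zero _ (det_of_addChar_ne_zero hψ)
  have hconj : Ψ * circulant a =
      blockDiagonal (fun j => circulant (partialFourier a (ψ j))) * Ψ := by
    ext ⟨x, j⟩ ⟨x', y'⟩
    simp only [Ψ, mul_apply, Fintype.sum_prod_type, kroneckerMap_apply, of_apply,
      circulant_apply, blockDiagonal_apply, one_apply, ite_mul, mul_ite, one_mul, zero_mul,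
      mul_zero, Prod.mk_sub_mk, Finset.sum_ite_eq, Finset.sum_ite_eq', Finset.mem_univ, if_true,
      Finset.sum_ite_irrel, Finset.sum_const_zero]
    exact partialFourier_convolution a (ψ j) (x - x') y'
  have hdet := congrArg det hconj
  rw [det_mul, det_mul, det_blockDiagonal, mul_comm] at hdet
  exact mul_right_cancel₀ hΨ hdet

theorem det_circulant_zmod_four (f : ZMod 4 → R) :
    (circulant f).det = (f 0 + f 1 + f 2 + f 3) * (f 0 - f 1 + f 2 - f 3) *
      ((f 0 - f 2) ^ 2 + (f 1 - f 3) ^ 2) := by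
  have hf : circulant f = !![f 0, f 3, f 2, f 1; f 1, f 0, f 3, f 2; f 2, f 1, f 0, f 3;
      f 3, f 2, f 1, f 0] := by
    ext i j
    fin_cases i <;> fin_cases j <;> rfl
  calc (circulant f).det
      = det (n := Fin 4) !![f 0, f 3, f 2, f 1; f 1, f 0, f 3, f 2; f 2, f 1, f 0, f 3;
          f 3, f 2, f 1, f 0] := congrArg det hf
    _ = _ := by
      simp only [det_succ_row_zero (n := 3), Fin.sum_univ_four, det_fin_three, submatrix_apply,
        of_apply, Fin.succAbove, Fin.reduceSucc, Fin.reduceCastSucc, Fin.reduceLT, Fin.isValue,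
        Fin.coe_ofNat_eq_mod, cons_val, ↓reduceIte]
      ring

end Circulant

/-- The character `y ↦ i ^ y` of `ℤ/4ℤ` with values in the Gaussian integers. -/
def gaussChar : AddChar (ZMod 4) GaussianInt :=
  AddChar.zmodChar 4 (ζ := ⟨0, 1⟩) (by decide)

theorem gaussChar_isPrimitive : gaussChar.IsPrimitive :=
  AddChar.zmod_char_primitive_of_eq_one_only_at_zero 4 _ (by decide)

/-- The sum of the entries `a (x, 0), …, a (x, 3)`. Together with `altRowSum` and `gaussRowSum` it
gives the Fourier coefficients of row `x` of `a`. -/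
def rowSum (a : ZMod 4 × ZMod 4 → ℤ) (x : ZMod 4) : ℤ :=
  a (x, 0) + a (x, 1) + a (x, 2) + a (x, 3)

/-- The alternating sum of row `x` of `a`. -/
def altRowSum (a : ZMod 4 × ZMod 4 → ℤ) (x : ZMod 4) : ℤ :=
  a (x, 0) - a (x, 1) + a (x, 2) - a (x, 3)

/-- The sum of row `x` of `a`, weighted by the powers of `i`. -/
def gaussRowSum (a : ZMod 4 × ZMod 4 → ℤ) (x : ZMod 4) : GaussianInt :=
  ⟨a (x, 0) - a (x, 2), a (x, 1) - a (x, 3)⟩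

/-- The part of the group determinant of `a` that comes from the characters of `(ℤ/4ℤ)²` which are
nontrivial on the second factor. -/
def cofactor (a : ZMod 4 × ZMod 4 → ℤ) : ℤ :=
  (circulant (altRowSum a)).det * (circulant (gaussRowSum a)).det.norm

section GaussChar

variable (a : ZMod 4 × ZMod 4 → ℤ)

theorem partialFourier_zmod_four (ψ : AddChar (ZMod 4) GaussianInt) (x : ZMod 4) :
    partialFourier (fun g => (a g : GaussianInt)) ψ x =
      a (x, 0) * ψ 0 + a (x, 1) * ψ 1 + a (x, 2) * ψ 2 + a (x, 3) * ψ 3 :=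
  Fin.sum_univ_four _

theorem partialFourier_mulShift_zero :
    partialFourier (fun g => (a g : GaussianInt)) (gaussChar.mulShift 0) =
      fun x => (rowSum a x : GaussianInt) := by
  ext1 x
  simp [partialFourier_zmod_four, rowSum]

theorem partialFourier_mulShift_one :
    partialFourier (fun g => (a g : GaussianInt)) (gaussChar.mulShift 1) = gaussRowSum a := by
  have h1 : gaussChar 1 = ⟨0, 1⟩ := by decide
  have h2 : gaussChar 2 = -1 := by decide
  have h3 : gaussChar 3 = ⟨0, -1⟩ := by decide
  ext1 x
  rw [AddChar.mulShift_one, partialFourier_zmod_four, h1, h2, h3]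
  ext <;> simp [gaussRowSum, sub_eq_add_neg]

theorem partialFourier_mulShift_two :
    partialFourier (fun g => (a g : GaussianInt)) (gaussChar.mulShift 2) =
      fun x => (altRowSum a x : GaussianInt) := by
  have h1 : gaussChar.mulShift 2 1 = -1 := by decide
  have h2 : gaussChar.mulShift 2 2 = 1 := by decide
  have h3 : gaussChar.mulShift 2 3 = -1 := by decide
  ext1 x
  simp [partialFourier_zmod_four, h1, h2, h3, altRowSum, sub_eq_add_neg]

theorem partialFourier_mulShift_three :
    partialFourier (fun g => (a g : GaussianInt)) (gaussChar.mulShift 3) =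
      fun x => star (gaussRowSum a x) := by
  have h1 : gaussChar.mulShift 3 1 = ⟨0, -1⟩ := by decide
  have h2 : gaussChar.mulShift 3 2 = -1 := by decide
  have h3 : gaussChar.mulShift 3 3 = ⟨0, 1⟩ := by decide
  ext1 x
  rw [partialFourier_zmod_four, h1, h2, h3]
  ext <;> simp [gaussRowSum, sub_eq_add_neg, add_comm]

theorem groupDet4x4_eq_det_rowSum_mul_cofactor :
    groupDet4x4 a = (circulant (rowSum a)).det * cofactor a := by
  have hψ : Function.Injective gaussChar.mulShift :=
    AddChar.to_mulShift_inj_of_isPrimitive gaussChar_isPrimitive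
  have hcast (f : ZMod 4 → ℤ) :
      (circulant fun x => (f x : GaussianInt)).det = (circulant f).det := (Int.cast_det _).symm
  have hstar : (circulant fun x => star (gaussRowSum a x)).det =
      star (circulant (gaussRowSum a)).det :=
    ((starRingEnd GaussianInt).map_det (circulant (gaussRowSum a))).symm
  let D (j : ZMod 4) : GaussianInt :=
    (circulant (partialFourier (fun g => (a g : GaussianInt)) (gaussChar.mulShift j))).det
  apply Int.cast_injective (α := GaussianInt)
  calc (groupDet4x4 a : GaussianInt)
      = (circulant fun g => (a g : GaussianInt)).det := Int.cast_det _
    _ = ∏ j, D j := det_circulant_prod hψ _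
    _ = D 0 * D 1 * D 2 * D 3 := Fin.prod_univ_four D
    _ = (circulant (rowSum a)).det * (circulant (gaussRowSum a)).det *
          (circulant (altRowSum a)).det * star (circulant (gaussRowSum a)).det := by
      simp only [D, partialFourier_mulShift_zero, partialFourier_mulShift_one,
        partialFourier_mulShift_two, partialFourier_mulShift_three, hcast, hstar]
    _ = ((circulant (rowSum a)).det * cofactor a : ℤ) := by
      push_cast [cofactor, Zsqrtd.norm_eq_mul_conj]
      ring

end GaussChar

section RowShift

variable (b : ZMod 4 × ZMod 4 → ℤ) (t : ZMod 4 → ℤ)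

theorem rowSum_add_comp_fst :
    rowSum (b + t ∘ Prod.fst) = fun x => rowSum b x + 4 * t x := by
  ext x
  simp only [rowSum, Pi.add_apply, Function.comp_apply]
  ring

theorem cofactor_add_comp_fst : cofactor (b + t ∘ Prod.fst) = cofactor b := by
  have halt : altRowSum (b + t ∘ Prod.fst) = altRowSum b := by
    ext x
    simp only [altRowSum, Pi.add_apply, Function.comp_apply]
    ring
  have hgauss : gaussRowSum (b + t ∘ Prod.fst) = gaussRowSum b := by
    ext x <;> simp [gaussRowSum]
  rw [cofactor, cofactor, halt, hgauss]

end RowShift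

/-- The row sums of `b` have Fourier coefficients congruent to `c` (trivial character), `d`
(character of order two) and `x ± iy` (characters of order four). The moduli are the steps by which
these coefficients can be changed independently by adding constants to the rows of `b`. -/
def RowSumModEq (b : ZMod 4 × ZMod 4 → ℤ) (c d x y : ℤ) : Prop :=
  rowSum b 0 + rowSum b 1 + rowSum b 2 + rowSum b 3 ≡ c [ZMOD 16] ∧
  rowSum b 0 - rowSum b 1 + rowSum b 2 - rowSum b 3 ≡ d [ZMOD 16] ∧
  rowSum b 0 - rowSum b 2 ≡ x [ZMOD 8] ∧ rowSum b 1 - rowSum b 3 ≡ y [ZMOD 8]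

theorem RowSumModEq.mem_S44 {b : ZMod 4 × ZMod 4 → ℤ} {c d x y n : ℤ}
    (h : RowSumModEq b c d x y) (hn : c * d * (x ^ 2 + y ^ 2) * cofactor b = n) : n ∈ S44 := by
  obtain ⟨hc, hd, hx, hy⟩ := h
  obtain ⟨k, hk⟩ := hc.dvd
  obtain ⟨l, hl⟩ := hd.dvd
  obtain ⟨m, hm⟩ := hx.dvd
  obtain ⟨r, hr⟩ := hy.dvd
  let t : ZMod 4 → ℤ := ![k + l + m, k - l + r, k + l - m, k - l - r]
  have h0 : t 0 = k + l + m := rfl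
  have h1 : t 1 = k - l + r := rfl
  have h2 : t 2 = k + l - m := rfl
  have h3 : t 3 = k - l - r := rfl
  refine ⟨b + t ∘ Prod.fst, ?_⟩
  rw [← hn, groupDet4x4_eq_det_rowSum_mul_cofactor, cofactor_add_comp_fst, rowSum_add_comp_fst,
    det_circulant_zmod_four, h0, h1, h2, h3, eq_add_of_sub_eq hk, eq_add_of_sub_eq hl,
    eq_add_of_sub_eq hm, eq_add_of_sub_eq hr]
  ring

theorem sixteen_mul_add_one_mem_S44 (m : ℤ) : 16 * m + 1 ∈ S44 := by
  let b : ZMod 4 × ZMod 4 → ℤ := Pi.single 0 1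
  have hb : RowSumModEq b (16 * m + 1) 1 1 0 := by
    rw [RowSumModEq, Int.ModEq, show (16 * m + 1) % 16 = 1 by omega]
    decide +kernel
  have he : cofactor b = 1 := by decide +kernel
  exact hb.mem_S44 (by rw [he]; ring)

-- The explicit arrays in this and the following lemmas were found by a computer search.
theorem exists_rowSumModEq_four_mul {n : ℤ} (hn : Odd n) :
    ∃ b, RowSumModEq b (4 * n) 2 1 1 ∧ cofactor b = 2 ^ 12 := by
  obtain h | h : 4 * n % 16 = 4 ∨ 4 * n % 16 = 12 := by
    obtain ⟨k, rfl⟩ := hn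
    omega
  · refine ⟨Function.uncurry
      !![0, 0, 0, 2; 0, 0, 0, 1; 0, 0, 0, 1; 0, 0, 0, 0], ?_⟩
    rw [RowSumModEq, Int.ModEq, h]
    decide +kernel
  · refine ⟨Function.uncurry
      !![1, 0, 0, -1; -1, 0, 0, 0; 0, -1, 0, 0; 0, 0, -1, -1], ?_⟩
    rw [RowSumModEq, Int.ModEq, h]
    decide +kernel

theorem exists_rowSumModEq_sixteen_mul (k : ℤ) :
    ∃ b, RowSumModEq b (16 * k) 2 1 1 ∧ cofactor b = 2 ^ 11 := by
  refine ⟨Function.uncurry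
    !![0, 0, 1, 0; 0, 0, 0, 0; 1, 0, 0, -1; 0, 0, -1, 0], ?_⟩
  rw [RowSumModEq, Int.ModEq, Int.mul_emod_right]
  decide +kernel

theorem two_pow_sixteen_mul_mem_S44 (n : ℤ) : 2 ^ 16 * n ∈ S44 := by
  obtain ⟨k, hk⟩ | hn := n.even_or_odd
  · obtain ⟨b, hb, he⟩ := exists_rowSumModEq_sixteen_mul k
    exact hb.mem_S44 (by rw [he, hk]; ring)
  · obtain ⟨b, hb, he⟩ := exists_rowSumModEq_four_mul hn
    exact hb.mem_S44 (by rw [he]; ring)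

theorem exists_rowSumModEq_two_mul {n : ℤ} (hn : Odd n) :
    ∃ b, RowSumModEq b (2 * n) 4 3 1 ∧ cofactor b = 2 ^ 11 := by
  obtain h | h | h | h : 2 * n % 16 = 2 ∨ 2 * n % 16 = 6 ∨ 2 * n % 16 = 10 ∨ 2 * n % 16 = 14 := by
    obtain ⟨k, rfl⟩ := hn
    omega
  · refine ⟨Function.uncurry
      !![1, 1, 1, 0; 0, 0, 0, 0; 1, 0, 0, -1; -1, 0, 0, 0], ?_⟩
    rw [RowSumModEq, Int.ModEq, h]
    decide +kernel
  · refine ⟨Function.uncurry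
      !![2, 1, 1, 0; 1, 0, 0, 0; 0, 0, 1, 0; 0, 0, 0, 0], ?_⟩
    rw [RowSumModEq, Int.ModEq, h]
    decide +kernel
  · refine ⟨Function.uncurry
      !![1, 1, 2, 1; 1, 0, 0, 1; 1, 0, 1, 0; 0, 0, 1, 0], ?_⟩
    rw [RowSumModEq, Int.ModEq, h]
    decide +kernel
  · refine ⟨Function.uncurry
      !![1, 0, 1, 0; 0, -1, 0, 0; 0, 0, 0, -1; 0, 0, -1, -1], ?_⟩
    rw [RowSumModEq, Int.ModEq, h]
    decide +kernel

theorem exists_modEq_sq_eq {n u c : ℤ} (h : u ≡ c [ZMOD n] ∨ u ≡ -c [ZMOD n]) :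
    ∃ x, x ≡ c [ZMOD n] ∧ x ^ 2 = u ^ 2 := by
  obtain h | h := h
  · exact ⟨u, h, rfl⟩
  · exact ⟨-u, by simpa using h.neg, neg_sq u⟩

theorem add_sub_modEq_of_sq_add_sq_modEq {a b : ℤ} (h : a ^ 2 + b ^ 2 ≡ -3 [ZMOD 8]) :
    (a + b ≡ 3 [ZMOD 8] ∨ a + b ≡ -3 [ZMOD 8]) ∧ (a - b ≡ 1 [ZMOD 8] ∨ a - b ≡ -1 [ZMOD 8]) ∨
    (a - b ≡ 3 [ZMOD 8] ∨ a - b ≡ -3 [ZMOD 8]) ∧ (a + b ≡ 1 [ZMOD 8] ∨ a + b ≡ -1 [ZMOD 8]) := by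
  have hzmod : ∀ a b : ZMod 8, a ^ 2 + b ^ 2 = -3 →
      (a + b = 3 ∨ a + b = -3) ∧ (a - b = 1 ∨ a - b = -1) ∨
      (a - b = 3 ∨ a - b = -3) ∧ (a + b = 1 ∨ a + b = -1) := by
    decide
  have hcast (u c : ℤ) : u ≡ c [ZMOD 8] ↔ (u : ZMod 8) = c :=
    (ZMod.intCast_eq_intCast_iff u c 8).symm
  simp only [hcast] at h ⊢
  push_cast at h ⊢
  exact hzmod a b h

theorem exists_sq_add_sq_eq_two_mul {a b : ℤ} (h : a ^ 2 + b ^ 2 ≡ -3 [ZMOD 8]) :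
    ∃ x y, x ≡ 3 [ZMOD 8] ∧ y ≡ 1 [ZMOD 8] ∧ x ^ 2 + y ^ 2 = 2 * (a ^ 2 + b ^ 2) := by
  obtain ⟨h3, h1⟩ | ⟨h3, h1⟩ := add_sub_modEq_of_sq_add_sq_modEq h <;>
  · obtain ⟨x, hx, hxsq⟩ := exists_modEq_sq_eq h3
    obtain ⟨y, hy, hysq⟩ := exists_modEq_sq_eq h1
    exact ⟨x, y, hx, hy, by rw [hxsq, hysq]; ring⟩

theorem two_pow_fifteen_mul_sq_add_sq_mul_mem_S44 {a b n : ℤ} (hab : a ^ 2 + b ^ 2 ≡ -3 [ZMOD 8])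
    (hn : Odd n) : 2 ^ 15 * (a ^ 2 + b ^ 2) * n ∈ S44 := by
  obtain ⟨x, y, hx, hy, hxy⟩ := exists_sq_add_sq_eq_two_mul hab
  obtain ⟨f, ⟨hc, hd, hx', hy'⟩, he⟩ := exists_rowSumModEq_two_mul hn
  have hf : RowSumModEq f (2 * n) 4 x y := ⟨hc, hd, hx'.trans hx.symm, hy'.trans hy.symm⟩
  exact hf.mem_S44 (by rw [he, hxy]; ring)

theorem exists_sq_add_sq_of_mem_Pset {p : ℤ} (hp : p ∈ Pset) : ∃ a b : ℤ, p = a ^ 2 + b ^ 2 := by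
  obtain ⟨hprime, hpos, hmod⟩ := hp
  lift p to ℕ using hpos.le
  have : Fact p.Prime := ⟨Nat.prime_iff_prime_int.mpr hprime⟩
  have hmod4 : p % 4 ≠ 3 := by
    unfold Int.ModEq at hmod
    omega
  obtain ⟨a, b, hab⟩ := Nat.Prime.sq_add_sq hmod4
  exact ⟨a, b, by exact_mod_cast hab.symm⟩

theorem stmt19 (m : ℤ) :
    (16 * m + 1) ∈ S44 ∧
    (2 ^ 16 * (4 * m + 1)) ∈ S44 ∧
    (2 ^ 16 * (4 * m - 1)) ∈ S44 ∧
    (2 ^ 16 * (2 * m)) ∈ S44 ∧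
    (∀ p ∈ Pset, (2 ^ 15 * p * (2 * m + 1)) ∈ S44) := by
  refine ⟨sixteen_mul_add_one_mem_S44 m, two_pow_sixteen_mul_mem_S44 _,
    two_pow_sixteen_mul_mem_S44 _, two_pow_sixteen_mul_mem_S44 _, fun p hp => ?_⟩
  obtain ⟨a, b, rfl⟩ := exists_sq_add_sq_of_mem_Pset hp
  exact two_pow_fifteen_mul_sq_add_sq_mul_mem_S44 hp.2.2 (odd_two_mul_add_one m)
end
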